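/- For the function g(t) = 2μ(1/√(t+1)) − log t on (0,∞), where μ(r) = (π/2)·K(1−r²)/K(r²) and K is the complete elliptic integral of the first kind (with parameter convention K(w) = ∫₀¹ dx/√((1−x²)(1−w x²))), the derivative satisfies g′(t) < 0 for all t > 0; that is, g is strictly decreasing on (0,∞). -/

import Mathlib

/-- Complete elliptic integral of the first kind,
`K(w) = ∫₀¹ dx / √((1 - x²)(1 - w x²))`. -/
noncomputable def ellK (w : ℝ) : ℝ :=
  ∫ x in (0:ℝ)..1, 1 / Real.sqrt ((1 - x ^ 2) * (1 - w * x ^ 2))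

/-- `μ(r) = (π/2) K(1 - r²) / K(r²)`. -/
noncomputable def muFn (r : ℝ) : ℝ :=
  (Real.pi / 2) * ellK (1 - r ^ 2) / ellK (r ^ 2)

/-- `g(t) = 2 μ(1/√(t+1)) - log t`. -/
noncomputable def gFn (t : ℝ) : ℝ :=
  2 * muFn (1 / Real.sqrt (t + 1)) - Real.log t

open Real Set Filter Topology MeasureTheory

/-- The complete elliptic integral of the first kind in trigonometric form. -/
noncomputable def trigK (w : ℝ) : ℝ :=
  ∫ θ in (0 : ℝ)..(π / 2), (√(1 - w * sin θ ^ 2))⁻¹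

/-- The complete elliptic integral of the second kind in trigonometric form. -/
noncomputable def trigE (w : ℝ) : ℝ :=
  ∫ θ in (0 : ℝ)..(π / 2), √(1 - w * sin θ ^ 2)

theorem one_sub_mul_sin_sq_pos {w : ℝ} (hw : w < 1) (θ : ℝ) : 0 < 1 - w * sin θ ^ 2 := by
  rcases le_or_gt w 0 with h | h
  · nlinarith [sq_nonneg (sin θ)]
  · nlinarith [sin_sq_le_one θ]

theorem continuous_comp_one_sub_mul_sin_sq {G : ℝ → ℝ} (hG : ContinuousOn G (Ioi 0)) {w : ℝ}
    (hw : w < 1) : Continuous fun θ => G (1 - w * sin θ ^ 2) :=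
  hG.comp_continuous (by fun_prop) fun θ => one_sub_mul_sin_sq_pos hw θ

theorem continuousOn_inv_sqrt : ContinuousOn (fun u : ℝ => (√u)⁻¹) (Ioi 0) :=
  continuous_sqrt.continuousOn.inv₀ fun _ hu => (sqrt_pos.2 hu).ne'

theorem ellK_eq_trigK {w : ℝ} : ellK w = trigK w := by
  have himg : sin '' Ioo 0 (π / 2) = Ioo 0 1 := by
    ext x
    constructor
    · rintro ⟨θ, ⟨h0, h1⟩, rfl⟩
      refine ⟨sin_pos_of_pos_of_lt_pi h0 (by linarith [pi_pos]), ?_⟩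
      have := sin_lt_sin_of_lt_of_le_pi_div_two (by linarith) le_rfl h1
      simpa using this
    · rintro ⟨h0, h1⟩
      exact ⟨arcsin x, ⟨arcsin_pos.2 h0, arcsin_lt_pi_div_two.2 h1⟩,
        sin_arcsin (by linarith) h1.le⟩
  have hinj : InjOn sin (Ioo 0 (π / 2)) :=
    injOn_sin.mono (Ioo_subset_Icc_self.trans (Icc_subset_Icc_left (by linarith [pi_pos])))
  unfold ellK trigK
  rw [intervalIntegral.integral_of_le zero_le_one,
    intervalIntegral.integral_of_le (by positivity), integral_Ioc_eq_integral_Ioo,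
    integral_Ioc_eq_integral_Ioo, ← himg,
    integral_image_eq_integral_abs_deriv_smul measurableSet_Ioo
      (fun x _ => (hasDerivAt_sin x).hasDerivWithinAt) hinj]
  refine setIntegral_congr_fun measurableSet_Ioo fun θ hθ => ?_
  have hc : 0 < cos θ := cos_pos_of_mem_Ioo ⟨by linarith [hθ.1, pi_pos], hθ.2⟩
  simp only [smul_eq_mul]
  rw [← cos_sq', sqrt_mul (sq_nonneg _), sqrt_sq hc.le, abs_of_pos hc, one_div, mul_inv,
    mul_inv_cancel_left₀ hc.ne']

theorem hasDerivAt_integral_comp_one_sub_mul_sin_sq {G G' : ℝ → ℝ}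
    (hG : ∀ u, 0 < u → HasDerivAt G (G' u) u) (hG' : ContinuousOn G' (Ioi 0)) {w : ℝ}
    (hw : w ∈ Ioo (0 : ℝ) 1) :
    HasDerivAt (fun w => ∫ θ in (0 : ℝ)..(π / 2), G (1 - w * sin θ ^ 2))
      (∫ θ in (0 : ℝ)..(π / 2), G' (1 - w * sin θ ^ 2) * (-sin θ ^ 2)) w := by
  obtain ⟨hw0, hw1⟩ := hw
  have hGc : ContinuousOn G (Ioi 0) := fun u hu => (hG u hu).continuousAt.continuousWithinAt
  obtain ⟨C, hC⟩ := (isCompact_Icc (a := (1 - w) / 2) (b := 1)).exists_bound_of_continuousOn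
    (hG'.mono fun u hu => lt_of_lt_of_le (by linarith) hu.1)
  refine (intervalIntegral.hasDerivAt_integral_of_dominated_loc_of_deriv_le
    (F := fun w θ => G (1 - w * sin θ ^ 2))
    (F' := fun w θ => G' (1 - w * sin θ ^ 2) * (-sin θ ^ 2)) (bound := fun _ => C)
    (s := Ioo 0 ((1 + w) / 2)) (Ioo_mem_nhds hw0 (by linarith)) ?_ ?_ ?_ ?_ ?_ ?_).2
  · filter_upwards [Iio_mem_nhds hw1] with v hv
    exact (continuous_comp_one_sub_mul_sin_sq hGc hv).aestronglyMeasurable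
  · exact (continuous_comp_one_sub_mul_sin_sq hGc hw1).intervalIntegrable _ _
  · exact ((continuous_comp_one_sub_mul_sin_sq hG' hw1).mul
      (by fun_prop)).aestronglyMeasurable
  · refine .of_forall fun θ _ v hv => ?_
    have h1 := sin_sq_le_one θ
    have h0 := sq_nonneg (sin θ)
    have hb := hC (1 - v * sin θ ^ 2) ⟨by nlinarith [hv.1, hv.2], by nlinarith [hv.1, hv.2]⟩
    rw [norm_mul, norm_neg, Real.norm_of_nonneg h0]
    nlinarith [norm_nonneg (G' (1 - v * sin θ ^ 2))]
  · exact intervalIntegrable_const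
  · refine .of_forall fun θ _ v hv => ?_
    have hu := one_sub_mul_sin_sq_pos (show v < 1 by linarith [hv.2]) θ
    refine (hG _ hu).comp v ?_
    simpa using ((hasDerivAt_id v).mul_const (sin θ ^ 2)).const_sub 1

theorem hasDerivAt_inv_sqrt {u : ℝ} (hu : 0 < u) :
    HasDerivAt (fun u : ℝ => (√u)⁻¹) (-(1 / 2) * (√u)⁻¹ ^ 3) u := by
  have h := (hasDerivAt_sqrt hu.ne').inv (sqrt_pos.2 hu).ne'
  refine h.congr_deriv ?_
  have := (sqrt_pos.2 hu).ne'
  field_simp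

theorem intervalIntegrable_comp_one_sub_mul_sin_sq {G : ℝ → ℝ} (hG : ContinuousOn G (Ioi 0))
    {w : ℝ} (hw : w < 1) :
    IntervalIntegrable (fun θ => G (1 - w * sin θ ^ 2)) volume 0 (π / 2) :=
  (continuous_comp_one_sub_mul_sin_sq hG hw).intervalIntegrable _ _

theorem hasDerivAt_trigE {w : ℝ} (hw : w ∈ Ioo (0 : ℝ) 1) :
    HasDerivAt trigE ((trigE w - trigK w) / (2 * w)) w := by
  refine (hasDerivAt_integral_comp_one_sub_mul_sin_sq (G := fun u => √u)
    (G' := fun u => (1 / 2) * (√u)⁻¹)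
    (fun u hu => (hasDerivAt_sqrt hu.ne').congr_deriv (by simp [mul_comm]))
    (continuousOn_const.mul continuousOn_inv_sqrt) hw).congr_deriv ?_
  have hw0 := hw.1.ne'
  unfold trigE trigK
  rw [← intervalIntegral.integral_sub
    (intervalIntegrable_comp_one_sub_mul_sin_sq (G := fun u => √u)
      continuous_sqrt.continuousOn hw.2)
    (intervalIntegrable_comp_one_sub_mul_sin_sq continuousOn_inv_sqrt hw.2),
    ← intervalIntegral.integral_div]
  refine intervalIntegral.integral_congr fun θ _ => ?_
  have hu := one_sub_mul_sin_sq_pos hw.2 θ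
  have hs := sqrt_pos.2 hu
  have hsq := sq_sqrt hu.le
  field_simp
  rw [hsq]
  ring

theorem integral_trigK_deriv {w : ℝ} (hw : w < 1) :
    ∫ θ in (0 : ℝ)..(π / 2), (√(1 - w * sin θ ^ 2) - (1 - w) * (√(1 - w * sin θ ^ 2))⁻¹
      - (1 - w) * w * sin θ ^ 2 * (√(1 - w * sin θ ^ 2))⁻¹ ^ 3) = 0 := by
  have hcont : Continuous fun θ => (√(1 - w * sin θ ^ 2))⁻¹ :=
    continuous_comp_one_sub_mul_sin_sq continuousOn_inv_sqrt hw
  rw [intervalIntegral.integral_eq_sub_of_hasDerivAt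
    (f := fun θ => w * (sin θ * cos θ * (√(1 - w * sin θ ^ 2))⁻¹))]
  · simp
  · intro θ _
    have hu := one_sub_mul_sin_sq_pos hw θ
    have hin : HasDerivAt (fun θ => 1 - w * sin θ ^ 2) (-(w * (2 * sin θ * cos θ))) θ := by
      simpa using (((hasDerivAt_sin θ).pow 2).const_mul w).const_sub 1
    have h := (((hasDerivAt_sin θ).mul (hasDerivAt_cos θ)).mul
      ((hasDerivAt_inv_sqrt hu).comp θ hin)).const_mul w
    refine h.congr_deriv ?_
    have hs := sqrt_pos.2 hu
    have hsq := sq_sqrt hu.le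
    have hc := cos_sq' θ
    simp only [Function.comp_apply, Pi.mul_apply]
    set D := √(1 - w * sin θ ^ 2)
    field_simp
    rw [hsq, hc]
    ring
  · exact (Continuous.intervalIntegrable (by fun_prop) _ _)

theorem hasDerivAt_trigK {w : ℝ} (hw : w ∈ Ioo (0 : ℝ) 1) :
    HasDerivAt trigK ((trigE w - (1 - w) * trigK w) / (2 * w * (1 - w))) w := by
  refine (hasDerivAt_integral_comp_one_sub_mul_sin_sq (G := fun u => (√u)⁻¹)
    (fun u hu => hasDerivAt_inv_sqrt hu)
    (continuousOn_const.mul (continuousOn_inv_sqrt.pow 3)) hw).congr_deriv ?_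
  have hw0 := hw.1.ne'
  have hw1 : 1 - w ≠ 0 := (sub_pos.2 hw.2).ne'
  have hK := intervalIntegrable_comp_one_sub_mul_sin_sq continuousOn_inv_sqrt hw.2
  have hE := intervalIntegrable_comp_one_sub_mul_sin_sq (G := fun u => √u)
    continuous_sqrt.continuousOn hw.2
  have hcont : Continuous fun θ => (√(1 - w * sin θ ^ 2))⁻¹ :=
    continuous_comp_one_sub_mul_sin_sq continuousOn_inv_sqrt hw.2
  have h := integral_trigK_deriv hw.2
  rw [intervalIntegral.integral_sub (hE.sub (hK.const_mul _))
    (Continuous.intervalIntegrable (by fun_prop) _ _),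
    intervalIntegral.integral_sub hE (hK.const_mul _),
    intervalIntegral.integral_const_mul] at h
  change trigE w - (1 - w) * trigK w - _ = 0 at h
  rw [sub_eq_zero.1 h, ← intervalIntegral.integral_div]
  refine intervalIntegral.integral_congr fun θ _ => ?_
  field_simp

/-- The left-hand side of Legendre's relation. -/
noncomputable def legendre (w : ℝ) : ℝ :=
  trigE w * trigK (1 - w) + trigE (1 - w) * trigK w - trigK w * trigK (1 - w)

theorem hasDerivAt_comp_one_sub {f : ℝ → ℝ} {f' w : ℝ} (h : HasDerivAt f f' (1 - w)) :
    HasDerivAt (fun w => f (1 - w)) (-f') w :=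
  (h.comp w ((hasDerivAt_id w).const_sub 1)).congr_deriv (by simp)

theorem one_sub_mem_Ioo {w : ℝ} (hw : w ∈ Ioo (0 : ℝ) 1) : 1 - w ∈ Ioo (0 : ℝ) 1 :=
  ⟨by linarith [hw.2], by linarith [hw.1]⟩

theorem hasDerivAt_legendre {w : ℝ} (hw : w ∈ Ioo (0 : ℝ) 1) : HasDerivAt legendre 0 w := by
  have hK := hasDerivAt_trigK hw
  have hE := hasDerivAt_trigE hw
  have hK' := hasDerivAt_comp_one_sub (hasDerivAt_trigK (one_sub_mem_Ioo hw))
  have hE' := hasDerivAt_comp_one_sub (hasDerivAt_trigE (one_sub_mem_Ioo hw))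
  refine (((hE.mul hK').add (hE'.mul hK)).sub (hK.mul hK')).congr_deriv ?_
  have hw0 := hw.1.ne'
  have hw1 : 1 - w ≠ 0 := (sub_pos.2 hw.2).ne'
  rw [sub_sub_cancel]
  field_simp
  ring

theorem trigE_le_trigK {w : ℝ} (hw : w ∈ Ioo (0 : ℝ) 1) : trigE w ≤ trigK w := by
  refine intervalIntegral.integral_mono_on (by positivity)
    (intervalIntegrable_comp_one_sub_mul_sin_sq (G := fun u => √u)
      continuous_sqrt.continuousOn hw.2)
    (intervalIntegrable_comp_one_sub_mul_sin_sq continuousOn_inv_sqrt hw.2) fun θ _ => ?_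
  have hs := sqrt_pos.2 (one_sub_mul_sin_sq_pos hw.2 θ)
  have h1 : √(1 - w * sin θ ^ 2) ≤ 1 :=
    sqrt_le_one.2 (by nlinarith [hw.1, sq_nonneg (sin θ)])
  exact h1.trans ((one_le_inv₀ hs).2 h1)

theorem trigK_nonneg (w : ℝ) : 0 ≤ trigK w :=
  intervalIntegral.integral_nonneg (by positivity) fun _ _ => by positivity

theorem trigE_one_sub_le {w : ℝ} (hw : w ∈ Ioo (0 : ℝ) 1) : trigE (1 - w) ≤ 1 + √w := by
  have h : ∫ θ in (0 : ℝ)..(π / 2), (cos θ + √w * sin θ) = 1 + √w := by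
    rw [intervalIntegral.integral_add (Continuous.intervalIntegrable (by fun_prop) _ _)
      (Continuous.intervalIntegrable (by fun_prop) _ _), intervalIntegral.integral_const_mul,
      integral_cos, integral_sin]
    simp
  rw [← h]
  refine intervalIntegral.integral_mono_on (by positivity)
    (intervalIntegrable_comp_one_sub_mul_sin_sq (G := fun u => √u)
      continuous_sqrt.continuousOn (by linarith [hw.1]))
    (Continuous.intervalIntegrable (by fun_prop) _ _) fun θ hθ => ?_
  have hc : 0 ≤ cos θ := cos_nonneg_of_mem_Icc ⟨by linarith [hθ.1, pi_pos], hθ.2⟩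
  have hs : 0 ≤ sin θ := sin_nonneg_of_mem_Icc ⟨hθ.1, by linarith [hθ.2, pi_pos]⟩
  refine sqrt_le_iff.2 ⟨by positivity, ?_⟩
  have h2 := sq_sqrt hw.1.le
  have h3 : 0 ≤ cos θ * (√w * sin θ) := by positivity
  nlinarith [sin_sq_add_cos_sq θ]

theorem trigK_le {w : ℝ} (hw : w ∈ Ioo (0 : ℝ) 1) : trigK w ≤ π / 2 * (√(1 - w))⁻¹ := by
  have h : ∫ _ in (0 : ℝ)..(π / 2), (√(1 - w))⁻¹ = π / 2 * (√(1 - w))⁻¹ := by simp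
  rw [← h]
  refine intervalIntegral.integral_mono_on (by positivity)
    (intervalIntegrable_comp_one_sub_mul_sin_sq continuousOn_inv_sqrt hw.2)
    intervalIntegrable_const fun θ _ => ?_
  refine inv_anti₀ (sqrt_pos.2 (by linarith [hw.2])) (sqrt_le_sqrt ?_)
  nlinarith [sin_sq_le_one θ, hw.1]

theorem pi_div_two_lt_trigK {w : ℝ} (hw : w ∈ Ioo (0 : ℝ) 1) : π / 2 < trigK w := by
  have hK := intervalIntegrable_comp_one_sub_mul_sin_sq continuousOn_inv_sqrt hw.2
  have h : 0 < ∫ θ in (0 : ℝ)..(π / 2), ((√(1 - w * sin θ ^ 2))⁻¹ - 1) := by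
    refine intervalIntegral.intervalIntegral_pos_of_pos_on (hK.sub intervalIntegrable_const)
      (fun θ hθ => ?_) (by positivity)
    have hsin : 0 < sin θ := sin_pos_of_pos_of_lt_pi hθ.1 (by linarith [hθ.2, pi_pos])
    have hs := sqrt_pos.2 (one_sub_mul_sin_sq_pos hw.2 θ)
    have hlt : √(1 - w * sin θ ^ 2) < 1 := by
      rw [sqrt_lt' one_pos]
      nlinarith [mul_pos hw.1 (pow_pos hsin 2)]
    exact sub_pos.2 ((one_lt_inv₀ hs).2 hlt)
  rw [intervalIntegral.integral_sub hK intervalIntegrable_const] at h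
  simpa [trigK] using h

theorem legendre_le {w : ℝ} (hw : w ∈ Ioo (0 : ℝ) 1) : legendre w ≤ π / 2 := by
  have hbound : ∀ v ∈ Ioo (0 : ℝ) 1,
      legendre v ≤ (1 + √v) * (π / 2 * (√(1 - v))⁻¹) := fun v hv => by
    have h1 : (trigE v - trigK v) * trigK (1 - v) ≤ 0 :=
      mul_nonpos_of_nonpos_of_nonneg (sub_nonpos.2 (trigE_le_trigK hv)) (trigK_nonneg _)
    have h2 : trigE (1 - v) * trigK v ≤ (1 + √v) * (π / 2 * (√(1 - v))⁻¹) :=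
      mul_le_mul (trigE_one_sub_le hv) (trigK_le hv) (trigK_nonneg _) (by positivity)
    unfold legendre
    linarith
  have hlim : Tendsto (fun v : ℝ => (1 + √v) * (π / 2 * (√(1 - v))⁻¹)) (𝓝[>] 0)
      (𝓝 (π / 2)) := by
    have hc : ContinuousAt (fun v : ℝ => (1 + √v) * (π / 2 * (√(1 - v))⁻¹)) 0 := by
      fun_prop (disch := simp)
    have := hc.tendsto
    simp only [sqrt_zero, sub_zero, sqrt_one, inv_one, add_zero, mul_one, one_mul] at this
    exact this.mono_left nhdsWithin_le_nhds
  refine ge_of_tendsto hlim ?_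
  filter_upwards [Ioo_mem_nhdsGT (zero_lt_one' ℝ)] with v hv
  rw [isOpen_Ioo.is_const_of_deriv_eq_zero isPreconnected_Ioo
    (fun x hx => (hasDerivAt_legendre hx).differentiableAt.differentiableWithinAt)
    (fun x hx => (hasDerivAt_legendre hx).deriv) hw hv]
  exact hbound v hv

theorem gFn_eq {t : ℝ} (ht : 0 < t) :
    gFn t = π * (trigK (1 - (t + 1)⁻¹) / trigK (t + 1)⁻¹) - log t := by
  unfold gFn muFn
  rw [div_pow, one_pow, sq_sqrt (by linarith), one_div, ellK_eq_trigK, ellK_eq_trigK]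
  ring

theorem inv_add_one_mem_Ioo {t : ℝ} (ht : 0 < t) : (t + 1)⁻¹ ∈ Ioo (0 : ℝ) 1 :=
  ⟨by positivity, inv_lt_one_of_one_lt₀ (by linarith)⟩

theorem hasDerivAt_gFn {t : ℝ} (ht : 0 < t) :
    HasDerivAt gFn
      ((π / 2 * legendre (t + 1)⁻¹ / trigK (t + 1)⁻¹ ^ 2 - 1) / t) t := by
  have hw := inv_add_one_mem_Ioo ht
  have hinv : HasDerivAt (fun t : ℝ => (t + 1)⁻¹) (-((t + 1)⁻¹ ^ 2)) t := by
    have := ((hasDerivAt_id t).add_const 1).inv (show t + 1 ≠ 0 by linarith)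
    refine this.congr_deriv ?_
    simp [neg_div]
  have hKpos : 0 < trigK (t + 1)⁻¹ := by linarith [pi_div_two_lt_trigK hw, pi_pos]
  have hquot := (hasDerivAt_comp_one_sub (hasDerivAt_trigK (one_sub_mem_Ioo hw))).div
    (hasDerivAt_trigK hw) hKpos.ne'
  have hmain := ((hquot.comp t hinv).const_mul π).sub (hasDerivAt_log ht.ne')
  have heq : gFn =ᶠ[𝓝 t]
      fun t => π * (trigK (1 - (t + 1)⁻¹) / trigK (t + 1)⁻¹) - log t := by
    filter_upwards [Ioi_mem_nhds ht] with s hs using gFn_eq hs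
  refine (HasDerivAt.congr_of_eventuallyEq (f := fun t =>
    π * (trigK (1 - (t + 1)⁻¹) / trigK (t + 1)⁻¹) - log t) hmain heq).congr_deriv ?_
  unfold legendre
  rw [sub_sub_cancel]
  have hsub : 1 - (t + 1)⁻¹ = t * (t + 1)⁻¹ := by field_simp; ring
  generalize trigK (1 - (t + 1)⁻¹) = L
  generalize trigE (1 - (t + 1)⁻¹) = E'
  rw [hsub]
  generalize trigK (t + 1)⁻¹ = k at hKpos
  generalize trigE (t + 1)⁻¹ = e
  have hk := hKpos.ne'
  have ht1 : t + 1 ≠ 0 := by linarith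
  field_simp
  ring

theorem deriv_gFn_neg {t : ℝ} (ht : 0 < t) : deriv gFn t < 0 := by
  rw [(hasDerivAt_gFn ht).deriv]
  have hw := inv_add_one_mem_Ioo ht
  have hK := pi_div_two_lt_trigK hw
  have hL := legendre_le hw
  have hpi := pi_pos
  refine div_neg_of_neg_of_pos (sub_neg.2 ?_) ht
  rw [div_lt_one (by nlinarith)]
  nlinarith

theorem stmt_0 :
    (∀ t : ℝ, 0 < t → deriv gFn t < 0) ∧ StrictAntiOn gFn (Set.Ioi 0) := by
  refine ⟨fun t ht => deriv_gFn_neg ht, strictAntiOn_of_deriv_neg (convex_Ioi 0)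
    (fun t ht => (hasDerivAt_gFn ht).continuousAt.continuousWithinAt) fun t ht => ?_⟩
  rw [interior_Ioi] at ht
  exact deriv_gFn_neg ht
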